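/- In the CreditRisk⁺ model, for every real z with 0 < z < ρ_g the expectation E_α[L z^L] is finite, and for every i = 1,…,n one has E_α[N_i z^L] ≤ ν_i^{−1} E_α[L z^L]; in particular E_α[N_i z^L] is finite for all z ∈ (0, ρ_g). -/

import Mathlib

open MeasureTheory ProbabilityTheory Real

noncomputable section

/-- The gamma measure is sigma-finite (needed to form product measures). -/
instance gammaMeasure.instSigmaFinite (a r : ℝ) :
    SigmaFinite (gammaMeasure a r) := by
  unfold ProbabilityTheory.gammaMeasure ProbabilityTheory.gammaPDF
  infer_instance

/-- Conditional Poisson intensity `R_i(s) = r_{0,i} S_0 + sum_j r_{j,i} s_j`. -/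
def crpR {n k : ℕ} (S0 : ℝ) (r0 : Fin n → ℝ) (r : Fin k → Fin n → ℝ)
    (s : Fin k → ℝ) (i : Fin n) : ℝ :=
  r0 i * S0 + ∑ j, r j i * s j

/-- The CreditRisk⁺ measure `P_α` on `(Fin k → ℝ) × (Fin n → ℕ)`: the product of the
Gamma factor measures (shape `α j`, scale `β j`, i.e. rate `(β j)⁻¹`), composed with the
kernel sending the factor vector `s` to the product of Poisson measures with means `R_i(s)`,
recorded jointly with `s`. -/
def crpMeasure {n k : ℕ} (S0 : ℝ) (r0 : Fin n → ℝ) (r : Fin k → Fin n → ℝ)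
    (α β : Fin k → ℝ) : Measure ((Fin k → ℝ) × (Fin n → ℕ)) :=
  (Measure.pi fun j => gammaMeasure (α j) (β j)⁻¹).bind fun s =>
    (Measure.pi fun i => poissonMeasure (crpR S0 r0 r s i).toNNReal).map fun x => (s, x)

/-- Portfolio loss `L = ∑ ν_i N_i`. -/
def crpLoss {n k : ℕ} (ν : Fin n → ℕ) (x : (Fin k → ℝ) × (Fin n → ℕ)) : ℕ :=
  ∑ i, ν i * x.2 i

/-- Value-at-risk of the ℕ-valued loss `L` at level `δ`: the smallest `l` with
`P[L ≤ l] ≥ δ` (a natural number since `L` is ℕ-valued). -/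
def crpVaR {n k : ℕ} (P : Measure ((Fin k → ℝ) × (Fin n → ℕ)))
    (ν : Fin n → ℕ) (δ : ℝ) : ℕ :=
  sInf {l : ℕ | ENNReal.ofReal δ ≤ P {x | crpLoss ν x ≤ l}}

/-- `ρ_g`, the radius of convergence of the probability generating function. -/
def crpRadius {n k : ℕ} (ν : Fin n → ℕ) (r : Fin k → Fin n → ℝ) (β : Fin k → ℝ) : ℝ :=
  sSup {z : ℝ | 0 < z ∧ ∀ j, ∑ i, r j i * z ^ ν i < 1 + (β j)⁻¹}

/-!
Conditionally on the factors the counts are independent Poisson variables, so the conditional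
generating function of `L` is the exponential of an affine function of the factors. Integrating
over independent gamma factors gives `E[w ^ L] < ∞` as soon as the slope in each factor stays below
its rate `(β j)⁻¹`, which holds for some `w > z` because `z < ρ_g`. The factor `L` in `L * z ^ L`
is absorbed by the geometric gap between `z` and `w`, and `ν i * N i ≤ L` pointwise.
-/

section Integrability

variable {Ω α β E : Type*} [MeasurableSpace Ω] [MeasurableSpace α] [MeasurableSpace β]
  [NormedAddCommGroup E]

lemma integrable_natCast_pow_mul_pow_of_lt {μ : Measure Ω} {X : Ω → ℕ} (hX : AEMeasurable X μ)
    {z w : ℝ} (hzw : |z| < w) (hw : Integrable (fun ω => w ^ X ω) μ) (p : ℕ) :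
    Integrable (fun ω => (X ω : ℝ) ^ p * z ^ X ω) μ := by
  have hw0 : 0 < w := (abs_nonneg z).trans_lt hzw
  obtain ⟨C, -, hC⟩ := Asymptotics.bound_of_isBigO_nat_atTop
    (isLittleO_pow_const_mul_const_pow_const_pow_of_norm_lt p (r₁ := z) hzw).isBigO
  have hmeas : AEMeasurable (fun ω => (X ω : ℝ) ^ p * z ^ X ω) μ :=
    (Measurable.of_discrete (f := fun m : ℕ => (m : ℝ) ^ p * z ^ m)).comp_aemeasurable hX
  refine (hw.norm.const_mul C).mono' hmeas.aestronglyMeasurable (ae_of_all _ fun ω => ?_)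
  exact hC (pow_pos hw0 _).ne'

lemma integrable_bind_map_prodMk {m : Measure α} {κ : α → Measure β} {f : α × β → E}
    (hf : StronglyMeasurable f) (hfκ : ∀ᵐ a ∂m, Integrable (fun b => f (a, b)) (κ a))
    (hfm : Integrable (fun a => ∫ b, ‖f (a, b)‖ ∂κ a) m) :
    Integrable f (m.bind fun a => (κ a).map fun b => (a, b)) := by
  refine ⟨hf.aestronglyMeasurable, ?_⟩
  calc ∫⁻ x, ‖f x‖ₑ ∂(m.bind fun a => (κ a).map fun b => (a, b))
      ≤ ∫⁻ a, ∫⁻ x, ‖f x‖ₑ ∂((κ a).map fun b => (a, b)) ∂m := Measure.lintegral_bind_le _ _ _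
    _ = ∫⁻ a, ‖∫ b, ‖f (a, b)‖ ∂κ a‖ₑ ∂m := by
        refine lintegral_congr_ae ?_
        filter_upwards [hfκ] with a ha
        rw [lintegral_map hf.enorm measurable_prodMk_left,
          ← ofReal_integral_norm_eq_lintegral_enorm ha,
          Real.enorm_of_nonneg (integral_nonneg fun _ => norm_nonneg _)]
    _ < ⊤ := hfm.hasFiniteIntegral

end Integrability

section Poisson

open scoped NNReal

lemma integrable_pow_poissonMeasure (a : ℝ≥0) (t : ℝ) :
    Integrable (fun m => t ^ m) (poissonMeasure a) := by
  rw [integrable_poissonMeasure_iff]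
  refine ((summable_pow_div_factorial (a * |t|)).mul_left (exp (-a))).congr fun m => ?_
  rw [norm_pow, norm_eq_abs, mul_pow]
  ring

lemma integral_pow_poissonMeasure (a : ℝ≥0) (t : ℝ) :
    ∫ m, t ^ m ∂poissonMeasure a = exp (a * (t - 1)) := by
  have hexp : HasSum (fun m : ℕ => (a * t) ^ m / m.factorial) (exp (a * t)) := by
    rw [exp_eq_exp_ℝ]
    exact NormedSpace.expSeries_div_hasSum_exp (a * t : ℝ)
  calc ∫ m, t ^ m ∂poissonMeasure a
      = ∑' m : ℕ, exp (-a) * ((a * t) ^ m / m.factorial) := by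
        rw [integral_poissonMeasure]
        refine tsum_congr fun m => ?_
        rw [smul_eq_mul, mul_pow]
        ring
    _ = exp (-a) * exp (a * t) := (hexp.mul_left _).tsum_eq
    _ = exp (a * (t - 1)) := by
        rw [← exp_add]
        ring_nf

variable {ι : Type*} [Fintype ι]

lemma integrable_pow_sum_mul_pi_poissonMeasure (a : ι → ℝ≥0) (ν : ι → ℕ) (w : ℝ) :
    Integrable (fun x : ι → ℕ => w ^ ∑ i, ν i * x i)
      (Measure.pi fun i => poissonMeasure (a i)) := by
  simp_rw [← Finset.prod_pow_eq_pow_sum, pow_mul]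
  exact Integrable.fintype_prod fun i => integrable_pow_poissonMeasure (a i) (w ^ ν i)

lemma integral_pow_sum_mul_pi_poissonMeasure (a : ι → ℝ≥0) (ν : ι → ℕ) (w : ℝ) :
    ∫ x : ι → ℕ, w ^ ∑ i, ν i * x i ∂(Measure.pi fun i => poissonMeasure (a i))
      = exp (∑ i, a i * (w ^ ν i - 1)) := by
  simp_rw [← Finset.prod_pow_eq_pow_sum, pow_mul]
  rw [integral_fintype_prod_eq_prod fun i m => (w ^ ν i) ^ m, exp_sum]
  simp_rw [integral_pow_poissonMeasure]

end Poisson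

section Gamma

lemma ae_nonneg_gammaMeasure (a r : ℝ) : ∀ᵐ x ∂gammaMeasure a r, 0 ≤ x := by
  have h : gammaMeasure a r (Set.Iio 0) = 0 := by
    rw [gammaMeasure, withDensity_apply _ measurableSet_Iio,
      lintegral_gammaPDF_of_nonpos le_rfl]
  simpa [ae_iff, Set.Iio] using h

lemma integrable_gammaPDFReal {a r : ℝ} (ha : 0 < a) (hr : 0 < r) :
    Integrable (gammaPDFReal a r) := by
  refine ⟨(measurable_gammaPDFReal a r).aestronglyMeasurable, ?_⟩
  rw [hasFiniteIntegral_iff_ofReal (ae_of_all _ (gammaPDFReal_nonneg ha hr))]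
  exact (lintegral_gammaPDF_eq_one ha hr).trans_lt ENNReal.one_lt_top

lemma exp_mul_gammaPDFReal {r t : ℝ} (ht : t < r) (a x : ℝ) :
    exp (t * x) * gammaPDFReal a r x = r ^ a / (r - t) ^ a * gammaPDFReal a (r - t) x := by
  have hne : (r - t) ^ a ≠ 0 := (rpow_pos_of_pos (sub_pos.2 ht) a).ne'
  unfold gammaPDFReal
  split_ifs
  · have hexp : exp (-((r - t) * x)) = exp (t * x) * exp (-(r * x)) := by
      rw [← exp_add]
      ring_nf
    rw [hexp]
    field_simp
  · simp

lemma integrable_exp_mul_gammaMeasure {a r t : ℝ} (ha : 0 < a) (hr : 0 < r) (ht : t < r) :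
    Integrable (fun x => exp (t * x)) (gammaMeasure a r) := by
  have hpdf : Measurable (gammaPDF a r) := (measurable_gammaPDFReal a r).ennreal_ofReal
  rw [gammaMeasure, integrable_withDensity_iff hpdf (ae_of_all _ fun _ => ENNReal.ofReal_lt_top)]
  simp_rw [gammaPDF, ENNReal.toReal_ofReal (gammaPDFReal_nonneg ha hr _),
    exp_mul_gammaPDFReal ht]
  exact (integrable_gammaPDFReal ha (sub_pos.2 ht)).const_mul _

end Gamma

section CreditRisk

variable {n k : ℕ} {ν : Fin n → ℕ} {S0 : ℝ} {r0 : Fin n → ℝ} {r : Fin k → Fin n → ℝ}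

@[fun_prop]
lemma measurable_crpLoss (ν : Fin n → ℕ) :
    Measurable (crpLoss ν : (Fin k → ℝ) × (Fin n → ℕ) → ℕ) := by
  unfold crpLoss
  fun_prop

lemma mul_count_le_crpLoss (ν : Fin n → ℕ) (x : (Fin k → ℝ) × (Fin n → ℕ)) (i : Fin n) :
    ν i * x.2 i ≤ crpLoss ν x :=
  Finset.single_le_sum (f := fun i => ν i * x.2 i) (fun _ _ => Nat.zero_le _) (Finset.mem_univ i)

lemma count_mul_pow_crpLoss_le {z : ℝ} (hz : 0 ≤ z) {i : Fin n} (hν : 0 < ν i)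
    (x : (Fin k → ℝ) × (Fin n → ℕ)) :
    (x.2 i : ℝ) * z ^ crpLoss ν x ≤ (ν i : ℝ)⁻¹ * ((crpLoss ν x : ℝ) * z ^ crpLoss ν x) := by
  have hcount : (x.2 i : ℝ) ≤ (ν i : ℝ)⁻¹ * crpLoss ν x := by
    rw [le_inv_mul_iff₀ (by exact_mod_cast hν)]
    exact_mod_cast mul_count_le_crpLoss ν x i
  rw [← mul_assoc]
  gcongr

lemma integrable_count_mul_pow_crpLoss {P : Measure ((Fin k → ℝ) × (Fin n → ℕ))} {z : ℝ}
    (hz : 0 ≤ z) (hL : Integrable (fun x => (crpLoss ν x : ℝ) * z ^ crpLoss ν x) P)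
    {i : Fin n} (hν : 0 < ν i) :
    Integrable (fun x => (x.2 i : ℝ) * z ^ crpLoss ν x) P := by
  refine (hL.const_mul (ν i : ℝ)⁻¹).mono' (by fun_prop) (ae_of_all _ fun x => ?_)
  rw [norm_of_nonneg (by positivity)]
  exact count_mul_pow_crpLoss_le hz hν x

lemma crpR_nonneg (hS0 : 0 ≤ S0) (hr0 : ∀ i, 0 ≤ r0 i) (hr : ∀ j i, 0 ≤ r j i)
    {s : Fin k → ℝ} (hs : ∀ j, 0 ≤ s j) (i : Fin n) : 0 ≤ crpR S0 r0 r s i :=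
  add_nonneg (mul_nonneg (hr0 i) hS0) (Finset.sum_nonneg fun j _ => mul_nonneg (hr j i) (hs j))

lemma sum_crpR_mul (S0 : ℝ) (r0 : Fin n → ℝ) (r : Fin k → Fin n → ℝ) (s : Fin k → ℝ)
    (c : Fin n → ℝ) :
    ∑ i, crpR S0 r0 r s i * c i = S0 * ∑ i, r0 i * c i + ∑ j, (∑ i, r j i * c i) * s j := by
  simp only [crpR, add_mul, Finset.sum_add_distrib, Finset.sum_mul, Finset.mul_sum]
  rw [Finset.sum_comm (f := fun i j => r j i * s j * c i)]
  congr 1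
  · exact Finset.sum_congr rfl fun i _ => by ring
  · exact Finset.sum_congr rfl fun j _ => Finset.sum_congr rfl fun i _ => by ring

lemma integral_pow_crpLoss_of_factors (hS0 : 0 ≤ S0) (hr0 : ∀ i, 0 ≤ r0 i)
    (hr : ∀ j i, 0 ≤ r j i) (ν : Fin n → ℕ) (w : ℝ) {s : Fin k → ℝ} (hs : ∀ j, 0 ≤ s j) :
    ∫ N, w ^ crpLoss ν (s, N) ∂(Measure.pi fun i => poissonMeasure (crpR S0 r0 r s i).toNNReal)
      = exp (S0 * ∑ i, r0 i * (w ^ ν i - 1)) *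
        ∏ j, exp ((∑ i, r j i * (w ^ ν i - 1)) * s j) := by
  rw [← exp_sum, ← exp_add, ← sum_crpR_mul S0 r0 r s fun i => w ^ ν i - 1]
  simp only [crpLoss, integral_pow_sum_mul_pi_poissonMeasure,
    coe_toNNReal _ (crpR_nonneg hS0 hr0 hr hs _)]

lemma integrable_pow_crpLoss (hS0 : 0 ≤ S0) (hr0 : ∀ i, 0 ≤ r0 i) (hr : ∀ j i, 0 ≤ r j i)
    {α β : Fin k → ℝ} (hα : ∀ j, 0 < α j) (hβ : ∀ j, 0 < β j) {w : ℝ} (hw : 0 ≤ w)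
    (hwβ : ∀ j, ∑ i, r j i * (w ^ ν i - 1) < (β j)⁻¹) :
    Integrable (fun x => w ^ crpLoss ν x) (crpMeasure S0 r0 r α β) := by
  have hmeas : Measurable fun x : (Fin k → ℝ) × (Fin n → ℕ) => w ^ crpLoss ν x := by fun_prop
  have hfactors : ∀ᵐ s ∂(Measure.pi fun j => gammaMeasure (α j) (β j)⁻¹), ∀ j, 0 ≤ s j :=
    (Filter.eventually_pi fun j => ae_nonneg_gammaMeasure _ _).filter_mono Measure.ae_pi_le_pi
  have hgamma : Integrable (fun s => ∏ j, exp ((∑ i, r j i * (w ^ ν i - 1)) * s j))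
      (Measure.pi fun j => gammaMeasure (α j) (β j)⁻¹) :=
    Integrable.fintype_prod fun j =>
      integrable_exp_mul_gammaMeasure (hα j) (inv_pos.2 (hβ j)) (hwβ j)
  refine integrable_bind_map_prodMk hmeas.stronglyMeasurable
    (ae_of_all _ fun s => integrable_pow_sum_mul_pi_poissonMeasure _ ν w)
    ((hgamma.const_mul (exp (S0 * ∑ i, r0 i * (w ^ ν i - 1)))).congr ?_)
  filter_upwards [hfactors] with s hs
  simp_rw [norm_of_nonneg (pow_nonneg hw _)]
  exact (integral_pow_crpLoss_of_factors hS0 hr0 hr ν w hs).symm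

lemma exists_gt_of_lt_crpRadius {β : Fin k → ℝ} {z : ℝ} (hz : 0 ≤ z)
    (hzρ : z < crpRadius ν r β) : ∃ w, z < w ∧ ∀ j, ∑ i, r j i * w ^ ν i < 1 + (β j)⁻¹ := by
  have hne : {y : ℝ | 0 < y ∧ ∀ j, ∑ i, r j i * y ^ ν i < 1 + (β j)⁻¹}.Nonempty := by
    by_contra! hempty
    rw [crpRadius, hempty, Real.sSup_empty] at hzρ
    exact hz.not_gt hzρ
  obtain ⟨w, ⟨-, hw⟩, hzw⟩ := exists_lt_of_lt_csSup hne hzρ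
  exact ⟨w, hzw, hw⟩

end CreditRisk

/-- for `0 < z < ρ_g`, `E_α[L z^L]` is finite and for each `i`,
`E_α[N_i z^L] ≤ ν_i⁻¹ E_α[L z^L]`; in particular `E_α[N_i z^L]` is finite. -/
theorem crp_Ni_zL_integrable {n k : ℕ} (hn : 0 < n) (hk : 0 < k)
    (ν : Fin n → ℕ) (hν : ∀ i, 0 < ν i)
    (S0 : ℝ) (hS0 : 0 ≤ S0)
    (r0 : Fin n → ℝ) (r : Fin k → Fin n → ℝ)
    (hr0 : ∀ i, 0 ≤ r0 i) (hr : ∀ j i, 0 ≤ r j i)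
    (hr0sum : ∑ i, r0 i = 1) (hrsum : ∀ j, ∑ i, r j i = 1)
    (hrpos : ∀ i, 0 < ∑ j, r j i)
    (α β : Fin k → ℝ) (hα : ∀ j, 0 < α j) (hβ : ∀ j, 0 < β j)
    (z : ℝ) (hz0 : 0 < z) (hzρ : z < crpRadius ν r β) :
    Integrable (fun x => (crpLoss ν x : ℝ) * z ^ crpLoss ν x) (crpMeasure S0 r0 r α β) ∧
    ∀ i : Fin n,
      Integrable (fun x => (x.2 i : ℝ) * z ^ crpLoss ν x) (crpMeasure S0 r0 r α β) ∧
      ∫ x, (x.2 i : ℝ) * z ^ crpLoss ν x ∂(crpMeasure S0 r0 r α β)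
        ≤ (ν i : ℝ)⁻¹ *
          ∫ x, (crpLoss ν x : ℝ) * z ^ crpLoss ν x ∂(crpMeasure S0 r0 r α β) := by
  obtain ⟨w, hzw, hw⟩ := exists_gt_of_lt_crpRadius hz0.le hzρ
  have hwβ : ∀ j, ∑ i, r j i * (w ^ ν i - 1) < (β j)⁻¹ := fun j => by
    simp only [mul_sub, mul_one, Finset.sum_sub_distrib, hrsum j]
    linarith [hw j]
  have hwL : Integrable (fun x => w ^ crpLoss ν x) (crpMeasure S0 r0 r α β) :=
    integrable_pow_crpLoss hS0 hr0 hr hα hβ (hz0.trans hzw).le hwβ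
  have hL : Integrable (fun x => (crpLoss ν x : ℝ) * z ^ crpLoss ν x)
      (crpMeasure S0 r0 r α β) := by
    simpa only [pow_one] using integrable_natCast_pow_mul_pow_of_lt
      (measurable_crpLoss ν).aemeasurable (by rwa [abs_of_pos hz0]) hwL 1
  refine ⟨hL, fun i => ?_⟩
  have hN := integrable_count_mul_pow_crpLoss hz0.le hL (hν i)
  refine ⟨hN, ?_⟩
  rw [← integral_const_mul]
  exact integral_mono hN (hL.const_mul _) fun x => count_mul_pow_crpLoss_le hz0.le (hν i) x
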